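/- arXiv:2210.13100 — 2 statements merged into one kernel-verified Lean document; each statement's English description precedes it below -/
import Mathlib

section
/- Let 0 < w < 1 and 1/2 < θ < 1, and let (x,y,z,t) be non-negative integers with x+y+z+t = n. Then w·[θ^{x+2y+t}(1−θ)^{x+2z+t} + θ^{x+2z+t}(1−θ)^{x+2y+t}] < 2(1−w)·θ^{2x+y+z}(1−θ)^{y+z+2t} if and only if (θ/(1−θ))^{(y−z)−(x−t)} + (θ/(1−θ))^{(z−y)−(x−t)} < 2(1−w)/w. Consequently, a table (x,y,z,t) is good if and only if moving it together with its transposed table (x,z,y,t) from the null set to the positive set of a rule strictly decreases the loss L_w. -/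
def tsum4 (T : ℕ × ℕ × ℕ × ℕ) : ℕ := T.1 + T.2.1 + T.2.2.1 + T.2.2.2

/-- The finite set of all voting tables of a committee of size `n`. -/
def tables (n : ℕ) : Finset (ℕ × ℕ × ℕ × ℕ) :=
  ((Finset.range (n+1)) ×ˢ (Finset.range (n+1)) ×ˢ (Finset.range (n+1)) ×ˢ
    (Finset.range (n+1))).filter (fun T => tsum4 T = n)

/-- Multinomial coefficient `n!/(x! y! z! t!)` as a real number. -/
noncomputable def mcoef (n : ℕ) (T : ℕ × ℕ × ℕ × ℕ) : ℝ :=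
  (n.factorial : ℝ) /
    (T.1.factorial * T.2.1.factorial * T.2.2.1.factorial * T.2.2.2.factorial)

/-- The loss `L_w(r) = w·ℙ_r(FP) + (1−w)·ℙ_r(FN)`. -/
noncomputable def loss (n : ℕ) (w θ : ℝ) (r : ℕ × ℕ × ℕ × ℕ → Fin 2) : ℝ :=
  w * ∑ T ∈ (tables n).filter (fun T => r T = 1),
        mcoef n T * θ ^ (T.1 + 2*T.2.1 + T.2.2.2) * (1-θ) ^ (T.1 + 2*T.2.2.1 + T.2.2.2)
  + (1-w) * ∑ T ∈ (tables n).filter (fun T => r T = 0),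
        mcoef n T * θ ^ (2*T.1 + T.2.1 + T.2.2.1) * (1-θ) ^ (T.2.1 + T.2.2.1 + 2*T.2.2.2)

/-- A table `(x,y,z,t)` is good (for competence `θ` and weight `w`) if
`(θ/(1−θ))^{(y−z)−(x−t)} + (θ/(1−θ))^{(z−y)−(x−t)} < 2(1−w)/w`. -/
def goodTable (θ w : ℝ) (T : ℕ × ℕ × ℕ × ℕ) : Prop :=
  (θ/(1-θ)) ^ (((T.2.1 : ℤ) - T.2.2.1) - ((T.1 : ℤ) - T.2.2.2))
    + (θ/(1-θ)) ^ (((T.2.2.1 : ℤ) - T.2.1) - ((T.1 : ℤ) - T.2.2.2)) < 2*(1-w)/w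

/-!
Moving a set of tables from the null set to the positive set changes the loss additively: each
table contributes its false-positive weight minus its false-negative weight. A table and its
transpose have the same multinomial coefficient and the same likelihood in the positive state, and
each null likelihood is the positive one times a power of the odds `θ / (1 - θ)`. Dividing the joint
contribution of the pair by the common positive factors leaves the inequality defining a good table.
When a table is its own transpose the pair contributes only once, which halves the change in the
loss and does not affect its sign.
-/

theorem sum_pair_neg_iff {ι M : Type*} [DecidableEq ι] [AddCommMonoid M] [LinearOrder M]
    [IsOrderedAddMonoid M] (f : ι → M) (i j : ι) :
    ∑ k ∈ {i, j}, f k < 0 ↔ f i + f j < 0 := by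
  obtain rfl | hij := eq_or_ne i j
  · rw [Finset.pair_eq_singleton, Finset.sum_singleton, add_self_neg_iff]
  · rw [Finset.sum_pair hij]

theorem pow_mul_pow_eq_div_zpow_mul {K : Type*} [CommGroupWithZero K] {p q : K} (hp : p ≠ 0)
    (hq : q ≠ 0) {a b c d : ℕ} {k : ℤ} (hac : (a : ℤ) = k + c) (hbd : (d : ℤ) = k + b) :
    p ^ a * q ^ b = (p / q) ^ k * (p ^ c * q ^ d) := by
  have hpa : p ^ a = p ^ k * p ^ c := by
    rw [← zpow_natCast, hac, zpow_add₀ hp, zpow_natCast]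
  have hqd : q ^ d = q ^ k * q ^ b := by
    rw [← zpow_natCast, hbd, zpow_add₀ hq, zpow_natCast]
  have hqk : q ^ k ≠ 0 := zpow_ne_zero k hq
  rw [hpa, hqd, div_zpow]
  field_simp

/-- The table with the counts `y` and `z` of the two mixed votes exchanged. -/
def transposeTable (T : ℕ × ℕ × ℕ × ℕ) : ℕ × ℕ × ℕ × ℕ :=
  (T.1, T.2.2.1, T.2.1, T.2.2.2)

/-- The likelihood of a single vote profile with table `T`, when exactly the first of the two
premises is true, so that a positive decision is wrong. -/
noncomputable def nullLikelihood (θ : ℝ) (T : ℕ × ℕ × ℕ × ℕ) : ℝ :=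
  θ ^ (T.1 + 2 * T.2.1 + T.2.2.2) * (1 - θ) ^ (T.1 + 2 * T.2.2.1 + T.2.2.2)

/-- The likelihood of a single vote profile with table `T`, when both premises are true, so that a
negative decision is wrong. -/
noncomputable def posLikelihood (θ : ℝ) (T : ℕ × ℕ × ℕ × ℕ) : ℝ :=
  θ ^ (2 * T.1 + T.2.1 + T.2.2.1) * (1 - θ) ^ (T.2.1 + T.2.2.1 + 2 * T.2.2.2)

/-- The contribution of `T` to the change in the loss when a set of tables containing `T` moves from
the null set to the positive set. -/
noncomputable def marginalLoss (n : ℕ) (w θ : ℝ) (T : ℕ × ℕ × ℕ × ℕ) : ℝ :=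
  mcoef n T * (w * nullLikelihood θ T - (1 - w) * posLikelihood θ T)

section

variable {n : ℕ} {w θ : ℝ} {T : ℕ × ℕ × ℕ × ℕ}

theorem mem_tables_iff : T ∈ tables n ↔ tsum4 T = n := by
  rw [tables, Finset.mem_filter, and_iff_right_iff_imp]
  simp only [tsum4, Finset.mem_product, Finset.mem_range]
  omega

theorem tsum4_transposeTable (T : ℕ × ℕ × ℕ × ℕ) : tsum4 (transposeTable T) = tsum4 T := by
  simp only [tsum4, transposeTable]
  omega

theorem mcoef_pos (n : ℕ) (T : ℕ × ℕ × ℕ × ℕ) : 0 < mcoef n T := by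
  unfold mcoef
  positivity

theorem mcoef_transposeTable (n : ℕ) (T : ℕ × ℕ × ℕ × ℕ) :
    mcoef n (transposeTable T) = mcoef n T := by
  simp only [mcoef, transposeTable]
  congr 1
  ring

theorem posLikelihood_pos (hθ0 : 0 < θ) (hθ1 : θ < 1) (T : ℕ × ℕ × ℕ × ℕ) :
    0 < posLikelihood θ T :=
  mul_pos (pow_pos hθ0 _) (pow_pos (sub_pos.2 hθ1) _)

theorem posLikelihood_transposeTable (θ : ℝ) (T : ℕ × ℕ × ℕ × ℕ) :
    posLikelihood θ (transposeTable T) = posLikelihood θ T := by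
  simp only [posLikelihood, transposeTable, add_right_comm _ T.2.2.1, add_comm T.2.2.1]

theorem nullLikelihood_eq_odds_zpow_mul (hθ0 : θ ≠ 0) (hθ1 : θ ≠ 1) (T : ℕ × ℕ × ℕ × ℕ) :
    nullLikelihood θ T =
      (θ / (1 - θ)) ^ (((T.2.1 : ℤ) - T.2.2.1) - ((T.1 : ℤ) - T.2.2.2)) * posLikelihood θ T :=
  pow_mul_pow_eq_div_zpow_mul hθ0 (sub_ne_zero.2 hθ1.symm) (by push_cast; ring)
    (by push_cast; ring)

theorem nullLikelihood_add_transposeTable_lt_iff_goodTable (hw : 0 < w) (hθ0 : 0 < θ)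
    (hθ1 : θ < 1) :
    w * (nullLikelihood θ T + nullLikelihood θ (transposeTable T))
        < 2 * (1 - w) * posLikelihood θ T ↔ goodTable θ w T := by
  rw [nullLikelihood_eq_odds_zpow_mul hθ0.ne' hθ1.ne,
    nullLikelihood_eq_odds_zpow_mul hθ0.ne' hθ1.ne, posLikelihood_transposeTable, ← add_mul,
    ← mul_assoc, mul_lt_mul_iff_left₀ (posLikelihood_pos hθ0 hθ1 T), ← lt_div_iff₀' hw]
  rfl

theorem loss_eq (n : ℕ) (w θ : ℝ) (r : ℕ × ℕ × ℕ × ℕ → Fin 2) :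
    loss n w θ r = w * ∑ T ∈ tables n with r T = 1, mcoef n T * nullLikelihood θ T
      + (1 - w) * ∑ T ∈ tables n with r T = 0, mcoef n T * posLikelihood θ T := by
  simp only [loss, nullLikelihood, posLikelihood, mul_assoc]

theorem marginalLoss_eq (n : ℕ) (w θ : ℝ) (T : ℕ × ℕ × ℕ × ℕ) :
    marginalLoss n w θ T =
      w * (mcoef n T * nullLikelihood θ T) - (1 - w) * (mcoef n T * posLikelihood θ T) := by
  rw [marginalLoss, mul_sub, mul_left_comm, mul_left_comm _ (1 - w)]

theorem marginalLoss_add_transposeTable (n : ℕ) (w θ : ℝ) (T : ℕ × ℕ × ℕ × ℕ) :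
    marginalLoss n w θ T + marginalLoss n w θ (transposeTable T) =
      mcoef n T * (w * (nullLikelihood θ T + nullLikelihood θ (transposeTable T))
        - 2 * (1 - w) * posLikelihood θ T) := by
  simp only [marginalLoss, mcoef_transposeTable, posLikelihood_transposeTable]
  ring

theorem marginalLoss_add_transposeTable_neg_iff_goodTable (hw : 0 < w) (hθ0 : 0 < θ)
    (hθ1 : θ < 1) :
    marginalLoss n w θ T + marginalLoss n w θ (transposeTable T) < 0 ↔ goodTable θ w T := by
  rw [marginalLoss_add_transposeTable, ← smul_eq_mul, smul_neg_iff_of_pos_left (mcoef_pos n T),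
    sub_neg, nullLikelihood_add_transposeTable_lt_iff_goodTable hw hθ0 hθ1]

theorem loss_piecewise_one_sub_loss {s : Finset (ℕ × ℕ × ℕ × ℕ)} {r : ℕ × ℕ × ℕ × ℕ → Fin 2}
    (hs : s ⊆ tables n) (hr : ∀ T ∈ s, r T = 0) :
    loss n w θ (s.piecewise 1 r) - loss n w θ r = ∑ T ∈ s, marginalLoss n w θ T := by
  have hpos : {T ∈ tables n | s.piecewise 1 r T = 1} = {T ∈ tables n | r T = 1} ∪ s := by
    ext T
    by_cases hT : T ∈ s <;> simp [hT, @hs T]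
  have hnull : {T ∈ tables n | r T = 0} = {T ∈ tables n | s.piecewise 1 r T = 0} ∪ s := by
    ext T
    by_cases hT : T ∈ s <;> simp [hT, @hs T, hr T]
  have hpos_disj : Disjoint {T ∈ tables n | r T = 1} s :=
    Finset.disjoint_left.2 fun T h hT ↦ by simp [hr T hT] at h
  have hnull_disj : Disjoint {T ∈ tables n | s.piecewise 1 r T = 0} s :=
    Finset.disjoint_left.2 fun T h hT ↦ by simp [hT] at h
  simp only [loss_eq, hpos, hnull, Finset.sum_union hpos_disj, Finset.sum_union hnull_disj,
    marginalLoss_eq, Finset.sum_sub_distrib, ← Finset.mul_sum]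
  ring

theorem loss_piecewise_pair_lt_iff_goodTable {r : ℕ × ℕ × ℕ × ℕ → Fin 2} (hw : 0 < w)
    (hθ0 : 0 < θ) (hθ1 : θ < 1) (hT : T ∈ tables n) (hr : r T = 0)
    (hr' : r (transposeTable T) = 0) :
    loss n w θ (Finset.piecewise {T, transposeTable T} 1 r) < loss n w θ r ↔ goodTable θ w T := by
  have hT' : transposeTable T ∈ tables n := by
    rwa [mem_tables_iff, tsum4_transposeTable, ← mem_tables_iff]
  rw [← sub_neg, loss_piecewise_one_sub_loss (by simp [Finset.insert_subset_iff, hT, hT'])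
    (by simp [hr, hr']), sum_pair_neg_iff,
    marginalLoss_add_transposeTable_neg_iff_goodTable hw hθ0 hθ1]

end

theorem goodTable_characterisation_general
    {n : ℕ} {w θ : ℝ} (hw : 0 < w) (hθ0 : 0 < θ) (hθ1 : θ < 1)
    {x y z t : ℕ} (hsum : x + y + z + t = n) :
    (w * (θ ^ (x + 2*y + t) * (1-θ) ^ (x + 2*z + t)
          + θ ^ (x + 2*z + t) * (1-θ) ^ (x + 2*y + t)) <
        2 * (1-w) * (θ ^ (2*x + y + z) * (1-θ) ^ (y + z + 2*t))
      ↔ (θ/(1-θ)) ^ (((y : ℤ) - z) - ((x : ℤ) - t))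
          + (θ/(1-θ)) ^ (((z : ℤ) - y) - ((x : ℤ) - t)) < 2*(1-w)/w) ∧
    (∀ r : ℕ × ℕ × ℕ × ℕ → Fin 2,
      r (x, y, z, t) = 0 → r (x, z, y, t) = 0 →
      (loss n w θ (fun S => if S = (x, y, z, t) ∨ S = (x, z, y, t) then 1 else r S)
          < loss n w θ r
        ↔ goodTable θ w (x, y, z, t))) := by
  refine ⟨nullLikelihood_add_transposeTable_lt_iff_goodTable (T := (x, y, z, t)) hw hθ0 hθ1,
    fun r hr hr' ↦ ?_⟩
  have hmove : (fun S ↦ if S = (x, y, z, t) ∨ S = (x, z, y, t) then 1 else r S) =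
      Finset.piecewise {(x, y, z, t), transposeTable (x, y, z, t)} 1 r := by
    ext S
    simp [Finset.piecewise, transposeTable]
  rw [hmove]
  exact loss_piecewise_pair_lt_iff_goodTable hw hθ0 hθ1 (mem_tables_iff.2 hsum) hr hr'

/-- Characterisation of good tables: the weighted loss change is negative iff the
inequality `(θ/(1−θ))^{(y−z)−(x−t)} + (θ/(1−θ))^{(z−y)−(x−t)} < 2(1−w)/w` holds;
consequently a table is good iff moving it together with its transposed table from
the null set to the positive set of a rule strictly decreases the loss `L_w`. -/
theorem goodTable_characterisation
    (n m : ℕ) (hm : 1 ≤ m) (hn : n = 2 * m + 1)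
    (w : ℝ) (hw0 : 0 < w) (hw1 : w < 1)
    (θ : ℝ) (hθ : 1/2 < θ) (hθ1 : θ < 1)
    (x y z t : ℕ) (hsum : x + y + z + t = n) :
    (w * (θ ^ (x + 2*y + t) * (1-θ) ^ (x + 2*z + t)
          + θ ^ (x + 2*z + t) * (1-θ) ^ (x + 2*y + t)) <
        2 * (1-w) * (θ ^ (2*x + y + z) * (1-θ) ^ (y + z + 2*t))
      ↔ (θ/(1-θ)) ^ (((y : ℤ) - z) - ((x : ℤ) - t))
          + (θ/(1-θ)) ^ (((z : ℤ) - y) - ((x : ℤ) - t)) < 2*(1-w)/w) ∧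
    (∀ r : ℕ × ℕ × ℕ × ℕ → Fin 2,
      r (x, y, z, t) = 0 → r (x, z, y, t) = 0 →
      (loss n w θ (fun S => if S = (x, y, z, t) ∨ S = (x, z, y, t) then 1 else r S)
          < loss n w θ r
        ↔ goodTable θ w (x, y, z, t))) :=
  goodTable_characterisation_general hw0 (by linarith) hθ1 hsum
end

section
/- For every odd integer n ≥ 3, there exist two voting tables T = (x,y,z,t) and T' = (x',y',z',t') with x+y+z+t = x'+y'+z'+t' = n, x − t = x' − t', and |y − z| = |y' − z'|, such that x > y+z+t but x' ≤ y'+z'+t'. Consequently the conclusion-based rule r_cb, defined by r_cb(x,y,z,t) = 1 if and only if x > y+z+t, assigns different values to two tables in the same (ρ,α)-equivalence class, and hence is never equal to the optimal rule for any competence 1/2 < θ < 1 and weight 0 < w < 1. -/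
open Classical in
/-- The optimal rule: positive exactly on the good tables. -/
noncomputable def ruleStar (θ w : ℝ) : ℕ × ℕ × ℕ × ℕ → Fin 2 :=
  fun T => if goodTable θ w T then 1 else 0

/-- The conclusion-based rule: decide `C` iff `x > y+z+t`. -/
def ruleCB : ℕ × ℕ × ℕ × ℕ → Fin 2 := fun T =>
  if T.2.1 + T.2.2.1 + T.2.2.2 < T.1 then 1 else 0

/-!
Moving one voter out of `x` and one out of `t`, and one into each of `y` and `z`, changes neither
`x - t` nor `y - z`, but lowers the margin `x - (y + z + t)` by two. Starting from a table of margin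
one or two, this move reverses the conclusion-based decision inside a `(ρ,α)`-class.
-/

/-- A voting table `(x, y, z, t)`, as the nested tuple on which `ruleStar` and `ruleCB` act. -/
abbrev VotingTable : Type := ℕ × ℕ × ℕ × ℕ

namespace VotingTable

/-- The size of the committee whose votes are recorded in the table. -/
def size (T : VotingTable) : ℕ := T.1 + T.2.1 + T.2.2.1 + T.2.2.2

/-- The invariant `ρ = x - t` of a table, an integer since it may be negative. -/
def rho (T : VotingTable) : ℤ := T.1 - T.2.2.2

/-- The invariant `α = |y - z|` of a table, taken in `ℤ` to avoid truncated subtraction. -/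
def alpha (T : VotingTable) : ℤ := |(T.2.1 : ℤ) - T.2.2.1|

/-- The `(ρ,α)`-equivalence of voting tables. Equality of sizes is not part of it. -/
def RhoAlphaEquiv (T T' : VotingTable) : Prop := T.rho = T'.rho ∧ T.alpha = T'.alpha

theorem size_exchange (x y z t : ℕ) :
    size (x + 1, y, z, t + 1) = size (x, y + 1, z + 1, t) := by
  simp only [size]
  omega

theorem rhoAlphaEquiv_exchange (x y z t : ℕ) :
    RhoAlphaEquiv (x + 1, y, z, t + 1) (x, y + 1, z + 1, t) := by
  simp only [RhoAlphaEquiv, rho, alpha, Nat.cast_add, Nat.cast_one, add_sub_add_right_eq_sub,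
    and_self]

end VotingTable

open VotingTable

/-- A rule is `(ρ,α)`-invariant in size `n` if it is constant on each `(ρ,α)`-equivalence class of
tables of a committee of size `n`; nothing is asked of it on tables of other sizes. -/
def IsRhoAlphaInvariant {β : Type*} (n : ℕ) (r : VotingTable → β) : Prop :=
  ∀ ⦃T T' : VotingTable⦄, T.size = n → T'.size = n → T.RhoAlphaEquiv T' → r T = r T'

theorem goodTable_iff_rho_alpha (θ w : ℝ) (T : VotingTable) :
    goodTable θ w T ↔
      (θ / (1 - θ)) ^ (T.alpha - T.rho) + (θ / (1 - θ)) ^ (-T.alpha - T.rho) <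
        2 * (1 - w) / w := by
  obtain ⟨x, y, z, t⟩ := T
  simp only [goodTable, alpha, rho]
  rcases abs_choice ((y : ℤ) - z) with h | h <;> rw [h]
  · rw [neg_sub (y : ℤ) z]
  · rw [neg_neg, neg_sub, add_comm]

theorem isRhoAlphaInvariant_ruleStar (θ w : ℝ) (n : ℕ) :
    IsRhoAlphaInvariant n (ruleStar θ w) := by
  rintro T T' - - ⟨hρ, hα⟩
  simp only [ruleStar, goodTable_iff_rho_alpha, hρ, hα]

theorem ruleCB_eq_one_iff {x y z t : ℕ} : ruleCB (x, y, z, t) = 1 ↔ y + z + t < x := by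
  simp [ruleCB]

theorem ruleCB_eq_zero_iff {x y z t : ℕ} : ruleCB (x, y, z, t) = 0 ↔ x ≤ y + z + t := by
  simp [ruleCB]

theorem exists_rhoAlphaEquiv_ruleCB_eq_one_eq_zero {n : ℕ} (h3 : 3 ≤ n) :
    ∃ T T' : VotingTable, T.size = n ∧ T'.size = n ∧ T.RhoAlphaEquiv T' ∧
      ruleCB T = 1 ∧ ruleCB T' = 0 := by
  -- The first table has margin `1` for odd `n` and `2` for even `n`.
  let x := n / 2
  let t := (n - 3) / 2
  have hsize : size (x + 1, 0, 0, t + 1) = n := by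
    simp only [size]
    omega
  exact ⟨(x + 1, 0, 0, t + 1), (x, 1, 1, t), hsize, (size_exchange x 0 0 t).symm.trans hsize,
    rhoAlphaEquiv_exchange x 0 0 t, ruleCB_eq_one_iff.2 (by omega),
    ruleCB_eq_zero_iff.2 (by omega)⟩

theorem IsRhoAlphaInvariant.exists_ruleCB_ne {n : ℕ} {r : VotingTable → Fin 2}
    (hr : IsRhoAlphaInvariant n r) (h3 : 3 ≤ n) :
    ∃ T : VotingTable, T.size = n ∧ ruleCB T ≠ r T := by
  obtain ⟨T, T', hT, hT', hequiv, hone, hzero⟩ := exists_rhoAlphaEquiv_ruleCB_eq_one_eq_zero h3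
  by_contra! heq
  have : (1 : Fin 2) = 0 := calc
    1 = r T := hone.symm.trans (heq T hT)
    _ = r T' := hr hT hT' hequiv
    _ = 0 := (heq T' hT').symm.trans hzero
  exact one_ne_zero this

theorem conclusionBased_never_optimal_general (n : ℕ) (h3 : 3 ≤ n) :
    (∃ x y z t x' y' z' t' : ℕ,
      x + y + z + t = n ∧ x' + y' + z' + t' = n ∧
      (x : ℤ) - t = (x' : ℤ) - t' ∧ |(y : ℤ) - z| = |(y' : ℤ) - z'| ∧
      y + z + t < x ∧ x' ≤ y' + z' + t') ∧
    (∀ r : VotingTable → Fin 2, IsRhoAlphaInvariant n r →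
      ∃ T : VotingTable, T.size = n ∧ ruleCB T ≠ r T) := by
  refine ⟨?_, fun r hr => hr.exists_ruleCB_ne h3⟩
  obtain ⟨⟨x, y, z, t⟩, ⟨x', y', z', t'⟩, hT, hT', ⟨hρ, hα⟩, hone, hzero⟩ :=
    exists_rhoAlphaEquiv_ruleCB_eq_one_eq_zero h3
  exact ⟨x, y, z, t, x', y', z', t', hT, hT', hρ, hα,
    ruleCB_eq_one_iff.1 hone, ruleCB_eq_zero_iff.1 hzero⟩

/-- For every odd `n ≥ 3` there are two voting tables in the same
`(ρ,α)`-equivalence class (same `x−t` and same `|y−z|`) on which the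
conclusion-based rule takes different values; hence, since the optimal rule is
constant on each `(ρ,α)`-class, the conclusion-based rule is never equal to the
optimal rule, for any competence `1/2 < θ < 1` and weight `0 < w < 1`. -/
theorem conclusionBased_never_optimal (n : ℕ) (hodd : Odd n) (h3 : 3 ≤ n) :
    (∃ x y z t x' y' z' t' : ℕ,
      x + y + z + t = n ∧ x' + y' + z' + t' = n ∧
      (x : ℤ) - t = (x' : ℤ) - t' ∧ |(y : ℤ) - z| = |(y' : ℤ) - z'| ∧
      y + z + t < x ∧ x' ≤ y' + z' + t') ∧
    (∀ θ w : ℝ, 1/2 < θ → θ < 1 → 0 < w → w < 1 →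
      ∃ T : ℕ × ℕ × ℕ × ℕ, T.1 + T.2.1 + T.2.2.1 + T.2.2.2 = n ∧
        ruleCB T ≠ ruleStar θ w T) := by
  have ⟨hpair, hrule⟩ := conclusionBased_never_optimal_general n h3
  exact ⟨hpair, fun θ w _ _ _ _ => hrule _ (isRhoAlphaInvariant_ruleStar θ w n)⟩
end
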